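/- Let n be an odd positive integer and let f : F → 𝔽₂ be defined by f(x) = tr(x^7). If 3 does not divide n, then nl₂(f) ≥ 2^{n−1} − (1/2)·√(3·2^{(3n−1)/2} + 2^n − 2^{(n+3)/2}); if 3 divides n, then nl₂(f) ≥ 2^{n−1} − (1/2)·√(3·2^{(3n−1)/2} + 2^n + 3·2^{n + 1/2} − 2^{(n+3)/2}). -/

import Mathlib

noncomputable section

/-- `Fq n` is the finite field with `2 ^ n` elements. -/
abbrev Fq (n : ℕ) : Type := GaloisField 2 n

/-- The absolute trace map `tr x = x + x^2 + x^4 + ⋯ + x^(2^(n-1))` from `Fq n` to `𝔽₂`. -/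
def tr {n : ℕ} (x : Fq n) : ZMod 2 := Algebra.trace (ZMod 2) (Fq n) x

/-- The derivative of `f` with respect to `a`. -/
def der {n : ℕ} (f : Fq n → ZMod 2) (a : Fq n) : Fq n → ZMod 2 :=
  fun x => f x + f (x + a)

/-- Iterated derivatives along a list of directions (head applied last/outermost). -/
def derIter {n : ℕ} (f : Fq n → ZMod 2) : List (Fq n) → (Fq n → ZMod 2)
  | [] => f
  | a :: as => der (derIter f as) a

/-- `g` has algebraic degree at most `r`: all `(r+1)`-th order derivatives vanish. -/
def degLE {n : ℕ} (g : Fq n → ZMod 2) (r : ℕ) : Prop :=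
  ∀ l : List (Fq n), l.length = r + 1 → derIter g l = fun _ => 0

/-- Hamming distance between two Boolean functions on `Fq n`. -/
def hdist {n : ℕ} (f g : Fq n → ZMod 2) : ℕ :=
  {x : Fq n | f x ≠ g x}.ncard

/-- The `r`-th order nonlinearity of `f`. -/
def nl {n : ℕ} (r : ℕ) (f : Fq n → ZMod 2) : ℕ :=
  sInf {d : ℕ | ∃ g : Fq n → ZMod 2, degLE g r ∧ d = hdist f g}

/-- The linear kernel of `f`: directions along which the derivative is constant. -/
def linKer {n : ℕ} (f : Fq n → ZMod 2) : Set (Fq n) :=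
  {b | ∃ c : ZMod 2, ∀ x, der f b x = c}

/-- The weight of a Boolean function on `Fq n`. -/
def wt {n : ℕ} (f : Fq n → ZMod 2) : ℕ := {x : Fq n | f x = 1}.ncard

/-! Let `q = 2 ^ n`, let `χ` be the sign character of `𝔽₂`, and let `X h = ∑ x, χ (h x)`. For
`h = f + g` with `g` of degree at most two, `d(f, g) = (q - X h) / 2` and
`(X h) ^ 2 = ∑ a, X (D_a h)`. Since `D_a h` is quadratic, `X (D_a h) ^ 2` is at most `q` times the
size of its linear kernel, which consists of roots of an explicit polynomial `P_a` that does not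
depend on `g`.

As `n` is odd, cubing is a bijection, so every `a ≠ 0` can be written as `t⁻³`. In the variable
`u = b t ^ 3` the polynomial `P_a` becomes, up to a unit, `v (v³ + s³) (v⁴ + s³ v + s⁶)` with
`v = u ^ 2 + u` and `s = t ^ 7`. It has at most eight roots, and at most two when `tr s = 1`,
because a nonzero admissible value of `v` forces `tr s = 0`. Hence
`X (D_a h) ≤ √(2 q) / 2 * (3 + χ (tr (t ^ 7)))`, and the sum over `t` leaves only the power sum
`∑ t, χ (tr (t ^ 7))`. It vanishes if `3 ∤ n`, when `x ↦ x ^ 7` is a bijection, and is at most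
`6 √q` in general.
-/

open Finset

lemma sum_eq_apply_zero_add_of_forall_ne_zero {α R : Type*} [Fintype α] [Zero α] [Ring R]
    {g : α → R} {c : R} (h : ∀ x ≠ 0, g x = c) :
    ∑ x, g x = g 0 + (Fintype.card α - 1) * c := by
  classical
  rw [← add_sum_erase univ g (mem_univ 0), sum_congr rfl fun x hx ↦ h x (ne_of_mem_erase hx)]
  simp [Nat.cast_pred (Fintype.card_pos (α := α))]

lemma pow_injective_of_coprime {F : Type*} [Field F] [Fintype F] {k : ℕ} (hk : k ≠ 0)
    (hcop : (Fintype.card F - 1).Coprime k) : Function.Injective fun x : F ↦ x ^ k := by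
  intro x y hxy
  obtain rfl | hy := eq_or_ne y 0
  · simpa [hk] using hxy
  have hx : x ≠ 0 := by
    rintro rfl
    exact pow_ne_zero k hy (by simpa [hk] using hxy.symm)
  have hroot : (x / y) ^ k = 1 := by
    rw [div_pow, div_eq_one_iff_eq (pow_ne_zero k hy)]
    exact hxy
  have hone : (x / y) ^ (Fintype.card F - 1).gcd k = 1 :=
    pow_gcd_eq_one.2 ⟨FiniteField.pow_card_sub_one_eq_one _ (div_ne_zero hx hy), hroot⟩
  rwa [hcop, pow_one, div_eq_one_iff_eq hy] at hone

section PowerSum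

variable {F 𝕜 : Type*} [Field F] [Fintype F] [RCLike 𝕜]

lemma sum_norm_sq_sum_mul_addChar {ψ : AddChar F 𝕜} (hψ : ψ ≠ 1) (φ : F → 𝕜) :
    ∑ a, ‖∑ b, φ b * ψ (a * b)‖ ^ 2 = Fintype.card F * ∑ b, ‖φ b‖ ^ 2 := by
  classical
  have orthogonality (b c : F) :
      ∑ a, ψ (a * (b - c)) = if b = c then (Fintype.card F : 𝕜) else 0 := by
    rw [AddChar.sum_mulShift _ (.of_ne_one hψ)]
    simp [sub_eq_zero]
  rw [← RCLike.ofReal_inj (K := 𝕜)]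
  push_cast
  calc ∑ a, (‖∑ b, φ b * ψ (a * b)‖ : 𝕜) ^ 2
      = ∑ a, ∑ b, ∑ c, φ b * starRingEnd 𝕜 (φ c) * ψ (a * (b - c)) := by
        refine sum_congr rfl fun a _ ↦ ?_
        rw [← RCLike.mul_conj, map_sum, sum_mul_sum]
        refine sum_congr rfl fun b _ ↦ sum_congr rfl fun c _ ↦ ?_
        rw [map_mul (starRingEnd 𝕜), ← AddChar.map_neg_eq_conj, mul_sub, sub_eq_add_neg,
          AddChar.map_add_eq_mul]
        ring
    _ = ∑ b, ∑ c, φ b * starRingEnd 𝕜 (φ c) * ∑ a, ψ (a * (b - c)) := by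
        rw [sum_comm]
        refine sum_congr rfl fun b _ ↦ ?_
        rw [sum_comm]
        simp only [mul_sum]
    _ = Fintype.card F * ∑ b, (‖φ b‖ : 𝕜) ^ 2 := by
        simp only [orthogonality, mul_ite, mul_zero, sum_ite_eq, mem_univ, if_true, RCLike.mul_conj,
          ← sum_mul]
        exact mul_comm _ _

section RootExcess

variable [DecidableEq F]

lemma card_filter_pow_eq_one {k : ℕ} (hk : k ≠ 0) :
    #{x : F | x ^ k = 1} = (Fintype.card F - 1).gcd k := by
  calc #{x : F | x ^ k = 1} = #{u : Fˣ | u ^ k = 1} := by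
        refine (card_bij (fun u _ ↦ u.val) ?_ (fun _ _ _ _ h ↦ Units.ext h) ?_).symm
        · simp [← Units.val_pow_eq_pow_val]
        · intro x hx
          have hx : x ^ k = 1 := by simpa using hx
          obtain ⟨u, rfl⟩ := IsUnit.of_pow_eq_one hx hk
          exact ⟨u, by simpa [← Units.val_pow_eq_pow_val] using hx, rfl⟩
    _ = Nat.card (powMonoidHom k : Fˣ →* Fˣ).ker := by
        rw [Nat.card_eq_fintype_card, Fintype.card_subtype]
        simp only [MonoidHom.mem_ker, powMonoidHom_apply]
    _ = (Fintype.card F - 1).gcd k := by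
        rw [IsCyclic.card_powMonoidHom_ker, Nat.card_eq_fintype_card, Fintype.card_units]

/-- The number of `k`-th roots of `b`, minus its average `1` over `b : F`. -/
def rootExcess (k : ℕ) (b : F) : ℝ := #{x : F | x ^ k = b} - 1

lemma sum_rootExcess_mul (k : ℕ) (g : F → 𝕜) :
    ∑ b, (rootExcess k b : 𝕜) * g b = ∑ x : F, g (x ^ k) - ∑ b, g b := by
  have fiber (b : F) : ∑ x : F with x ^ k = b, g (x ^ k) = #{x : F | x ^ k = b} * g b := by
    rw [sum_congr rfl fun x hx ↦ congrArg g (mem_filter.1 hx).2, sum_const, nsmul_eq_mul]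
  rw [← sum_fiberwise univ (fun x : F ↦ x ^ k) fun x ↦ g (x ^ k)]
  simp [fiber, rootExcess, sub_mul]

lemma rootExcess_zero {k : ℕ} (hk : k ≠ 0) : rootExcess k (0 : F) = 0 := by
  simp [rootExcess, hk, filter_eq']

lemma rootExcess_pow {k : ℕ} (hk : k ≠ 0) {x : F} (hx : x ≠ 0) :
    rootExcess k (x ^ k) = (Fintype.card F - 1).gcd k - 1 := by
  have hcard : #{y : F | y ^ k = x ^ k} = #{y : F | y ^ k = 1} :=
    card_equiv (Equiv.divRight₀ x hx) fun y ↦ by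
      simp [div_pow, div_eq_one_iff_eq (pow_ne_zero k hx)]
  rw [rootExcess, hcard, card_filter_pow_eq_one hk]

lemma sum_rootExcess_sq {k : ℕ} (hk : k ≠ 0) :
    ∑ b : F, rootExcess k b ^ 2 =
      (Fintype.card F - 1) * ((Fintype.card F - 1).gcd k - 1 : ℝ) := by
  have hsum : ∑ b : F, rootExcess k b = 0 := by
    simpa using sum_rootExcess_mul k (fun _ : F ↦ (1 : ℝ))
  have h := sum_rootExcess_mul k (rootExcess (F := F) k)
  rw [hsum, sum_eq_apply_zero_add_of_forall_ne_zero fun x hx ↦ rootExcess_pow hk hx,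
    zero_pow hk, rootExcess_zero hk] at h
  simpa [sq] using h

lemma sum_rootExcess_mul_sum_addChar {ψ : AddChar F 𝕜} (hψ : ψ ≠ 1) {k : ℕ} (hk : k ≠ 0) :
    ∑ a, (rootExcess k a : 𝕜) * ∑ b, (rootExcess k b : 𝕜) * ψ (a * b) =
      (Fintype.card F - 1) * ∑ x, ψ (x ^ k) := by
  have orthogonality (b : F) : ∑ a, ψ (a * b) = if b = 0 then (Fintype.card F : 𝕜) else 0 := by
    rw [AddChar.sum_mulShift _ (.of_ne_one hψ), Nat.cast_ite, Nat.cast_zero]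
  have hsum : ∑ a, ∑ b, (rootExcess k b : 𝕜) * ψ (a * b) = 0 := by
    rw [sum_comm]
    simp [← mul_sum, orthogonality, rootExcess_zero hk]
  have hpow (x : F) (hx : x ≠ 0) :
      ∑ b, (rootExcess k b : 𝕜) * ψ (x ^ k * b) = ∑ y, ψ (y ^ k) := by
    simp only [sum_rootExcess_mul, ← mul_pow, mul_comm (x ^ k), orthogonality,
      pow_ne_zero k hx, if_false, sub_zero]
    simp_rw [mul_comm _ x]
    exact Equiv.sum_comp (Equiv.mulLeft₀ x hx) fun y ↦ ψ (y ^ k)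
  rw [sum_rootExcess_mul, hsum, sum_eq_apply_zero_add_of_forall_ne_zero hpow]
  have hmean : ∑ b : F, (rootExcess k b : 𝕜) = 0 := by
    simpa using sum_rootExcess_mul k fun _ : F ↦ (1 : 𝕜)
  simp [hk, hmean]

end RootExcess

-- `(q - 1) ∑ ψ (x ^ k)` is the bilinear form of the matrix `ψ (a * b)`, which is `√q` times an
-- isometry, evaluated at `rootExcess k`.
theorem norm_sum_addChar_pow_le {ψ : AddChar F 𝕜} (hψ : ψ ≠ 1) {k : ℕ} (hk : k ≠ 0) :
    ‖∑ x, ψ (x ^ k)‖ ≤ ((Fintype.card F - 1).gcd k - 1) * √(Fintype.card F) := by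
  classical
  set q : ℝ := (Fintype.card F : ℝ)
  set d : ℝ := ((Fintype.card F - 1).gcd k : ℝ)
  have hq : 0 < q - 1 := sub_pos.2 (Nat.one_lt_cast.2 Fintype.one_lt_card)
  have hd : 0 ≤ d - 1 :=
    sub_nonneg.2 (Nat.one_le_cast.2 (Nat.gcd_pos_of_pos_right _ hk.bot_lt))
  set φ : F → 𝕜 := fun b ↦ rootExcess k b
  have hφ : ∑ b, ‖φ b‖ ^ 2 = (q - 1) * (d - 1) := by
    simpa [φ] using sum_rootExcess_sq (F := F) hk
  have key : ((q - 1) * ‖∑ x, ψ (x ^ k)‖) ^ 2 ≤ ((q - 1) * ((d - 1) * √q)) ^ 2 := calc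
    ((q - 1) * ‖∑ x, ψ (x ^ k)‖) ^ 2 = ‖∑ a, φ a * ∑ b, φ b * ψ (a * b)‖ ^ 2 := by
      rw [sum_rootExcess_mul_sum_addChar hψ hk, norm_mul]
      congr 2
      rw [← abs_of_pos hq, ← RCLike.norm_ofReal (K := 𝕜)]
      simp [q]
    _ ≤ (∑ a, ‖φ a‖ * ‖∑ b, φ b * ψ (a * b)‖) ^ 2 := by
      gcongr
      exact norm_sum_le_of_le _ fun a _ ↦ norm_mul_le _ _
    _ ≤ (∑ a, ‖φ a‖ ^ 2) * ∑ a, ‖∑ b, φ b * ψ (a * b)‖ ^ 2 := sum_mul_sq_le_sq_mul_sq _ _ _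
    _ = ((q - 1) * ((d - 1) * √q)) ^ 2 := by
      rw [sum_norm_sq_sum_mul_addChar hψ, hφ, mul_pow, mul_pow, Real.sq_sqrt (by positivity)]
      ring
  exact le_of_mul_le_mul_left (abs_le_of_sq_le_sq' key (by positivity)).2 hq

end PowerSum

section KernelPolynomial

variable {F : Type*} [Field F]

/-- The polynomial `P_a(b)` with `D_c D_b D_a tr(x^7) = tr(P_a(b) c^4)`; its roots contain the
linear kernel of `D_a tr(x^7)`. -/
def kernelPoly (a b : F) : F :=
  (a ^ 2 * b ^ 4 + a ^ 4 * b ^ 2) ^ 4 + (a * b ^ 4 + a ^ 4 * b) ^ 2 + (a * b ^ 2 + a ^ 2 * b)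

variable [CharP F 2]

lemma kernelPoly_inv_cube_mul {t : F} (ht : t ≠ 0) (u : F) :
    kernelPoly (t ^ 3)⁻¹ (u / t ^ 3) * t ^ 72 =
      (u ^ 2 + u) * ((u ^ 2 + u) ^ 3 + (t ^ 7) ^ 3) *
        ((u ^ 2 + u) ^ 4 + (t ^ 7) ^ 3 * (u ^ 2 + u) + (t ^ 7) ^ 6) := by
  rw [kernelPoly]
  field_simp
  grind

lemma sq_add_self_cases_of_kernelPoly_eq_zero
    (hcube : Function.Injective fun x : F ↦ x ^ 3) {t b : F} (ht : t ≠ 0)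
    (hb : kernelPoly (t ^ 3)⁻¹ b = 0) :
    letI v := (b * t ^ 3) ^ 2 + b * t ^ 3
    v = 0 ∨ v = t ^ 7 ∨ v ^ 4 + (t ^ 7) ^ 3 * v + (t ^ 7) ^ 6 = 0 := by
  have hfactor := kernelPoly_inv_cube_mul ht (b * t ^ 3)
  rw [mul_div_cancel_right₀ b (pow_ne_zero 3 ht), hb, zero_mul, eq_comm] at hfactor
  rcases mul_eq_zero.1 hfactor with h | h
  · refine (mul_eq_zero.1 h).imp_right fun h ↦ .inl (hcube ?_)
    exact CharTwo.add_eq_zero.1 h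
  · exact .inr (.inr h)

lemma eq_or_eq_add_of_quartic (hcube : Function.Injective fun x : F ↦ x ^ 3) {s e v w : F}
    (hv : v ^ 4 + s ^ 3 * v + e = 0) (hw : w ^ 4 + s ^ 3 * w + e = 0) : w = v ∨ w = v + s := by
  have hprod : (v + w) * ((v + w) ^ 3 + s ^ 3) = 0 := by grind
  rcases mul_eq_zero.1 hprod with h | h
  · exact .inl (CharTwo.add_eq_zero.1 h).symm
  · have hs : v + w = s := hcube (CharTwo.add_eq_zero.1 h)
    exact .inr (by rw [← hs, CharTwo.add_cancel_left])

lemma eq_or_eq_add_inv_of_sq_add_self_eq {c x y : F} (hc : c ≠ 0)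
    (h : (x * c) ^ 2 + x * c = (y * c) ^ 2 + y * c) : y = x ∨ y = x + c⁻¹ := by
  have hprod : (x + y) * c * ((x + y) * c + 1) = 0 := by grind
  rcases mul_eq_zero.1 hprod with h | h
  · exact .inl (CharTwo.add_eq_zero.1 (eq_zero_of_ne_zero_of_mul_right_eq_zero hc h)).symm
  · have hsum : x + y = c⁻¹ := eq_inv_of_mul_eq_one_left (CharTwo.add_eq_zero.1 h)
    exact .inr (by rw [← hsum, CharTwo.add_cancel_left])

lemma card_le_two_of_forall_eq_or_eq_add {G : Type*} [Add G] {S : Finset G} {k : G}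
    (h : ∀ x ∈ S, ∀ y ∈ S, y = x ∨ y = x + k) : #S ≤ 2 := by
  classical
  obtain rfl | ⟨x, hx⟩ := S.eq_empty_or_nonempty
  · simp
  · have hsub : S ⊆ {x, x + k} := fun y hy ↦ by simpa using h x hx y hy
    exact (card_le_card hsub).trans card_le_two

lemma card_le_two_mul_card_of_sq_add_self_mem {c : F} (hc : c ≠ 0) {S V : Finset F}
    (h : ∀ b ∈ S, (b * c) ^ 2 + b * c ∈ V) : #S ≤ 2 * #V := by
  classical
  refine card_le_mul_card_image_of_maps_to h 2 fun v _ ↦ ?_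
  refine card_le_two_of_forall_eq_or_eq_add (k := c⁻¹) fun x hx y hy ↦ ?_
  exact eq_or_eq_add_inv_of_sq_add_self_eq hc ((mem_filter.1 hx).2.trans (mem_filter.1 hy).2.symm)

lemma card_kernelPoly_inv_cube_le_eight [Fintype F] [DecidableEq F]
    (hcube : Function.Injective fun x : F ↦ x ^ 3) {t : F} (ht : t ≠ 0) :
    #{b | kernelPoly (t ^ 3)⁻¹ b = 0} ≤ 8 := by
  set Q : Finset F := {v | v ^ 4 + (t ^ 7) ^ 3 * v + (t ^ 7) ^ 6 = 0} with hQ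
  have hQcard : #Q ≤ 2 := card_le_two_of_forall_eq_or_eq_add (k := t ^ 7) fun v hv w hw ↦ by
    rw [hQ, mem_filter_univ] at hv hw
    exact eq_or_eq_add_of_quartic hcube hv hw
  have hmem : ∀ b ∈ ({b | kernelPoly (t ^ 3)⁻¹ b = 0} : Finset F),
      (b * t ^ 3) ^ 2 + b * t ^ 3 ∈ {0, t ^ 7} ∪ Q := fun b hb ↦ by
    have hroot : kernelPoly (t ^ 3)⁻¹ b = 0 := (mem_filter_univ b).1 hb
    simpa only [hQ, mem_union, mem_insert, mem_singleton, mem_filter_univ, or_assoc] using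
      sq_add_self_cases_of_kernelPoly_eq_zero hcube ht hroot
  calc #{b | kernelPoly (t ^ 3)⁻¹ b = 0} ≤ 2 * #({0, t ^ 7} ∪ Q) :=
        card_le_two_mul_card_of_sq_add_self_mem (pow_ne_zero 3 ht) hmem
    _ ≤ 2 * (2 + 2) := by
        gcongr
        exact (card_union_le _ _).trans (add_le_add card_le_two hQcard)

end KernelPolynomial

section SignSum

lemma zmod_two_eq_one_of_ne_zero {t : ZMod 2} (ht : t ≠ 0) : t = 1 :=
  Fin.eq_one_of_ne_zero t ht

/-- The sign character `t ↦ (-1)^t` of `𝔽₂`. -/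
def signChar : AddChar (ZMod 2) ℝ :=
  AddChar.zmodChar 2 (ζ := -1) (by norm_num)

lemma signChar_one : signChar 1 = -1 := by
  simp [signChar, AddChar.zmodChar_apply, ZMod.val_one]

lemma signChar_eq_ite (t : ZMod 2) : signChar t = if t = 0 then 1 else -1 := by
  split_ifs with ht
  · rw [ht, AddChar.map_zero_eq_one]
  · rw [zmod_two_eq_one_of_ne_zero ht, signChar_one]

variable {α : Type*} [Fintype α]

/-- The sum `∑ x, (-1)^(h x)`, i.e. the Walsh coefficient of the Boolean function `h` at `0`. -/
def signSum (h : α → ZMod 2) : ℝ := ∑ x, signChar (h x)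

lemma signSum_le_card (h : α → ZMod 2) : signSum h ≤ Fintype.card α := by
  have hle (t : ZMod 2) : signChar t ≤ 1 := by
    rw [signChar_eq_ite]
    split_ifs <;> norm_num
  simpa [signSum] using sum_le_sum fun x (_ : x ∈ univ) ↦ hle (h x)

lemma signSum_add (f g : α → ZMod 2) :
    signSum (f + g) = Fintype.card α - 2 * ({x | f x ≠ g x}.ncard : ℝ) := by
  classical
  have hsign (x : α) : signChar ((f + g) x) = 1 - 2 * if f x ≠ g x then 1 else 0 := by
    simp only [signChar_eq_ite, Pi.add_apply, CharTwo.add_eq_zero]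
    by_cases h : f x = g x <;> norm_num [h]
  simp only [signSum, hsign, sum_sub_distrib, ← mul_sum, sum_boole]
  simp [Set.ncard_eq_toFinset_card']

end SignSum

section Derivative

variable {n : ℕ}

lemma der_add (f g : Fq n → ZMod 2) (a : Fq n) : der (f + g) a = der f a + der g a := by
  ext x
  simp only [der, Pi.add_apply]
  ring

lemma der_const (c : ZMod 2) (a : Fq n) : der (fun _ ↦ c) a = 0 :=
  funext fun _ ↦ CharTwo.add_self_eq_zero c

lemma derIter_concat (f : Fq n → ZMod 2) (l : List (Fq n)) (a : Fq n) :
    derIter f (l ++ [a]) = derIter (der f a) l := by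
  induction l with
  | nil => rfl
  | cons b l ih => rw [List.cons_append, derIter, derIter, ih]

lemma degLE_zero_iff {f : Fq n → ZMod 2} : degLE f 0 ↔ ∀ a, der f a = 0 := by
  refine ⟨fun h a ↦ h [a] rfl, fun h l hl ↦ ?_⟩
  obtain ⟨a, rfl⟩ := List.length_eq_one_iff.1 hl
  exact h a

lemma degLE_succ_iff {f : Fq n → ZMod 2} {r : ℕ} :
    degLE f (r + 1) ↔ ∀ a, degLE (der f a) r := by
  refine ⟨fun h a l hl ↦ ?_, fun h l hl ↦ ?_⟩
  · rw [← derIter_concat]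
    exact h _ (by simp [hl])
  · obtain ⟨l', a, rfl⟩ := List.eq_nil_or_concat' l |>.resolve_left (by rintro rfl; simp at hl)
    rw [derIter_concat]
    exact h a l' (by simpa using hl)

lemma degLE_zero_fun (r : ℕ) : degLE (0 : Fq n → ZMod 2) r := by
  induction r with
  | zero => exact degLE_zero_iff.2 (der_const 0)
  | succ r ih => exact degLE_succ_iff.2 fun a ↦ by rwa [show der 0 a = 0 from der_const 0 a]

lemma mem_linKer_of_forall_der_der_ne_one {h : Fq n → ZMod 2} {b : Fq n}
    (hb : ∀ c x, der (der h b) c x ≠ 1) : b ∈ linKer h := by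
  refine ⟨der h b 0, fun x ↦ ?_⟩
  have hx : der (der h b) x 0 = 0 := by
    by_contra hne
    exact hb x 0 (zmod_two_eq_one_of_ne_zero hne)
  rw [der, zero_add] at hx
  exact (CharTwo.add_eq_zero.1 hx).symm

variable [Fintype (Fq n)]

lemma sq_signSum (h : Fq n → ZMod 2) : signSum h ^ 2 = ∑ a, signSum (der h a) := by
  simp only [signSum, sq, sum_mul_sum]
  rw [sum_comm (t := univ) (f := fun a x ↦ signChar (der h a x))]
  refine sum_congr rfl fun x _ ↦ ?_
  rw [← Equiv.sum_comp (Equiv.addLeft x)]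
  simp [der, AddChar.map_add_eq_mul]

lemma signSum_eq_zero_of_der_eq_one {h : Fq n → ZMod 2} {c : Fq n} (hc : ∀ x, der h c x = 1) :
    signSum h = 0 := by
  have hflip (x : Fq n) : signChar (h (x + c)) = -signChar (h x) := by
    have hx : h (x + c) = 1 + h x := by
      rw [← hc x, der, add_comm (h x), CharTwo.add_cancel_right]
    rw [hx, AddChar.map_add_eq_mul, signChar_one, neg_one_mul]
  have hneg : signSum h = -signSum h := by
    conv_lhs => rw [signSum, ← Equiv.sum_comp (Equiv.addRight c)]
    simp [hflip, signSum]
  linarith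

lemma sq_signSum_le_ncard_linKer_mul {h : Fq n → ZMod 2} (hh : degLE h 2) :
    signSum h ^ 2 ≤ (linKer h).ncard * Fintype.card (Fq n) := by
  classical
  have hconst (b c x : Fq n) : der (der h b) c x = der (der h b) c 0 := by
    have h3 := congrFun (degLE_zero_iff.1 (degLE_succ_iff.1 (degLE_succ_iff.1 hh b) c) x) 0
    rw [der, zero_add] at h3
    exact (CharTwo.add_eq_zero.1 h3).symm
  have hzero (b : Fq n) (hb : b ∉ linKer h) : signSum (der h b) = 0 := by
    obtain ⟨c, x, hcx⟩ : ∃ c x, der (der h b) c x = 1 := by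
      by_contra! hne
      exact hb (mem_linKer_of_forall_der_der_ne_one hne)
    exact signSum_eq_zero_of_der_eq_one fun y ↦ by rw [hconst, ← hconst b c x, hcx]
  calc signSum h ^ 2 = ∑ b ∈ (linKer h).toFinset, signSum (der h b) := by
        rw [sq_signSum]
        refine (sum_subset (subset_univ _) fun b _ hb ↦ hzero b ?_).symm
        simpa using hb
    _ ≤ ∑ _b ∈ (linKer h).toFinset, (Fintype.card (Fq n) : ℝ) :=
        sum_le_sum fun _ _ ↦ signSum_le_card _
    _ = (linKer h).ncard * Fintype.card (Fq n) := by
        rw [sum_const, nsmul_eq_mul, Set.ncard_eq_toFinset_card']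

lemma le_nl_of_forall_sq_signSum_add_le {r : ℕ} {f : Fq n → ZMod 2} {Y : ℝ}
    (hY : ∀ g, degLE g r → signSum (f + g) ^ 2 ≤ Y) :
    (Fintype.card (Fq n) : ℝ) / 2 - 1 / 2 * √Y ≤ nl r f := by
  obtain ⟨g, hg, hnl⟩ : nl r f ∈ {d | ∃ g, degLE g r ∧ d = hdist f g} :=
    Nat.sInf_mem ⟨_, 0, degLE_zero_fun r, rfl⟩
  have hbound : signSum (f + g) ≤ √Y := Real.le_sqrt_of_sq_le (hY g hg)
  rw [signSum_add, ← hdist, ← hnl] at hbound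
  linarith

end Derivative

section Trace

variable {n : ℕ}

lemma tr_add (x y : Fq n) : tr (x + y) = tr x + tr y :=
  map_add (Algebra.trace (ZMod 2) (Fq n)) x y

lemma tr_sq (x : Fq n) : tr (x ^ 2) = tr x := by
  simpa [tr, FiniteField.coe_frobeniusAlgEquivOfAlgebraic] using
    Algebra.trace_eq_of_algEquiv (FiniteField.frobeniusAlgEquivOfAlgebraic (ZMod 2) (Fq n)) x

lemma tr_sq_add_self (x : Fq n) : tr (x ^ 2 + x) = 0 := by
  rw [tr_add, tr_sq, CharTwo.add_self_eq_zero]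

lemma tr_eq_zero_of_quartic {s v : Fq n} (hs : s ≠ 0) (hv : v ^ 4 + s ^ 3 * v + s ^ 6 = 0) :
    tr s = 0 := by
  -- Dividing the equation by `s ^ 4` exhibits `s ^ 2` as the sum of two conjugates of `v / s`.
  have hsq : s ^ 2 = ((v / s) ^ 2) ^ 2 + v / s := by
    field_simp
    grind
  rw [← tr_sq, hsq, tr_add, tr_sq, tr_sq, CharTwo.add_self_eq_zero]

lemma exists_tr_mul_eq_one {x : Fq n} (hx : x ≠ 0) : ∃ y, tr (x * y) = 1 := by
  by_contra! h
  refine hx ((traceForm_nondegenerate (ZMod 2) (Fq n)).1 x fun y ↦ ?_)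
  by_contra hne
  exact h y (zmod_two_eq_one_of_ne_zero hne)

/-- The additive character `x ↦ (-1)^(tr x)` of `Fq n`. -/
def traceChar (n : ℕ) : AddChar (Fq n) ℝ :=
  signChar.compAddMonoidHom (Algebra.trace (ZMod 2) (Fq n)).toAddMonoidHom

lemma traceChar_ne_one (n : ℕ) : traceChar n ≠ 1 := by
  obtain ⟨y, hy⟩ := exists_tr_mul_eq_one (one_ne_zero (α := Fq n))
  refine AddChar.ne_one_iff.2 ⟨1 * y, ?_⟩
  change signChar (tr (1 * y)) ≠ 1
  rw [hy, signChar_one]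
  norm_num

/-- The Boolean power function `x ↦ tr (x ^ k)` on `Fq n`. -/
def trPow (n k : ℕ) : Fq n → ZMod 2 := fun x ↦ tr (x ^ k)

lemma abs_signSum_trPow_le [Fintype (Fq n)] {k : ℕ} (hk : k ≠ 0) :
    |signSum (trPow n k)| ≤ ((Fintype.card (Fq n) - 1).gcd k - 1) * √(Fintype.card (Fq n)) :=
  norm_sum_addChar_pow_le (traceChar_ne_one n) hk

end Trace

section SeventhPower

variable {n : ℕ}

lemma der_der_der_trPow_seven (a b c x : Fq n) :
    der (der (der (trPow n 7) a) b) c x = tr (kernelPoly a b * c ^ 4) := by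
  set α := a ^ 2 * b ^ 4 + a ^ 4 * b ^ 2
  set β := a * b ^ 4 + a ^ 4 * b
  set γ := a * b ^ 2 + a ^ 2 * b
  calc der (der (der (trPow n 7) a) b) c x = tr (α * c + β * c ^ 2 + γ * c ^ 4) := by
        simp only [der, trPow, ← tr_add]
        congr 1
        grind
    _ = tr (((α * c) ^ 2) ^ 2) + tr ((β * c ^ 2) ^ 2) + tr (γ * c ^ 4) := by
        simp only [tr_add, tr_sq]
    _ = tr (kernelPoly a b * c ^ 4) := by
        simp only [← tr_add, kernelPoly]
        congr 1
        ring

lemma der_der_der_trPow_seven_add {g : Fq n → ZMod 2} (hg : degLE g 2) (a b c x : Fq n) :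
    der (der (der (trPow n 7 + g) a) b) c x = tr (kernelPoly a b * c ^ 4) := by
  have hg0 : der (der (der g a) b) c = 0 :=
    degLE_zero_iff.1 (degLE_succ_iff.1 (degLE_succ_iff.1 hg a) b) c
  rw [der_add, der_add, der_add, hg0, add_zero, der_der_der_trPow_seven]

lemma degLE_der_trPow_seven_add {g : Fq n → ZMod 2} (hg : degLE g 2) (a : Fq n) :
    degLE (der (trPow n 7 + g) a) 2 := by
  refine degLE_succ_iff.2 fun b ↦ degLE_succ_iff.2 fun c ↦ degLE_zero_iff.2 fun d ↦ ?_
  rw [show der (der (der (trPow n 7 + g) a) b) c = fun _ ↦ tr (kernelPoly a b * c ^ 4) from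
    funext (der_der_der_trPow_seven_add hg a b c), der_const]

lemma kernelPoly_eq_zero_of_mem_linKer {g : Fq n → ZMod 2} (hg : degLE g 2) {a b : Fq n}
    (hb : b ∈ linKer (der (trPow n 7 + g) a)) : kernelPoly a b = 0 := by
  obtain ⟨e, he⟩ := hb
  by_contra hne
  obtain ⟨y, hy⟩ := exists_tr_mul_eq_one hne
  obtain ⟨c, rfl⟩ : ∃ c, c ^ 4 = y := (bijective_iterateFrobenius (Fq n) 2 2).surjective y
  have hzero : der (der (der (trPow n 7 + g) a) b) c = 0 := by
    rw [funext he, der_const]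
  rw [← der_der_der_trPow_seven_add hg a b c 0, hzero] at hy
  exact zero_ne_one hy

variable [Fintype (Fq n)]

lemma signSum_der_le_of_card_kernelPoly_le [DecidableEq (Fq n)] {g : Fq n → ZMod 2}
    (hg : degLE g 2) {a : Fq n} {m : ℕ} (hm : #{b | kernelPoly a b = 0} ≤ 2 * m ^ 2) :
    signSum (der (trPow n 7 + g) a) ≤ √(2 * Fintype.card (Fq n)) * m := by
  have hker : (linKer (der (trPow n 7 + g) a)).ncard ≤ 2 * m ^ 2 := by
    refine le_trans ?_ hm
    rw [← Set.ncard_coe_finset]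
    exact Set.ncard_le_ncard fun b hb ↦ by simpa using kernelPoly_eq_zero_of_mem_linKer hg hb
  refine le_of_sq_le_sq ?_ (by positivity)
  calc signSum (der (trPow n 7 + g) a) ^ 2
      ≤ (linKer (der (trPow n 7 + g) a)).ncard * Fintype.card (Fq n) :=
        sq_signSum_le_ncard_linKer_mul (degLE_der_trPow_seven_add hg a)
    _ ≤ (2 * m ^ 2 : ℕ) * Fintype.card (Fq n) := by gcongr
    _ = (√(2 * Fintype.card (Fq n)) * m) ^ 2 := by
        rw [mul_pow, Real.sq_sqrt (by positivity)]
        push_cast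
        ring

lemma card_kernelPoly_inv_cube_le_two [DecidableEq (Fq n)]
    (hcube : Function.Injective fun x : Fq n ↦ x ^ 3) {t : Fq n} (ht : tr (t ^ 7) ≠ 0) :
    #{b | kernelPoly (t ^ 3)⁻¹ b = 0} ≤ 2 := by
  have ht0 : t ≠ 0 := by
    rintro rfl
    simp [tr] at ht
  refine card_le_two_mul_card_of_sq_add_self_mem (V := {0}) (pow_ne_zero 3 ht0) fun b hb ↦ ?_
  have hroot : kernelPoly (t ^ 3)⁻¹ b = 0 := (mem_filter_univ b).1 hb
  rcases sq_add_self_cases_of_kernelPoly_eq_zero hcube ht0 hroot with h | h | h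
  · exact mem_singleton.2 h
  · exact absurd (h ▸ tr_sq_add_self _) ht
  · exact absurd (tr_eq_zero_of_quartic (pow_ne_zero 7 ht0) h) ht

lemma signSum_der_inv_cube_le (hcube : Function.Injective fun x : Fq n ↦ x ^ 3)
    {g : Fq n → ZMod 2} (hg : degLE g 2) {t : Fq n} (ht : t ≠ 0) :
    signSum (der (trPow n 7 + g) (t ^ 3)⁻¹) ≤
      √(2 * Fintype.card (Fq n)) / 2 * (3 + signChar (trPow n 7 t)) := by
  classical
  rw [signChar_eq_ite, trPow]
  split_ifs with htr
  · have hcard : #{b | kernelPoly (t ^ 3)⁻¹ b = 0} ≤ 2 * 2 ^ 2 :=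
      card_kernelPoly_inv_cube_le_eight hcube ht
    linarith [signSum_der_le_of_card_kernelPoly_le hg hcard]
  · have hcard : #{b | kernelPoly (t ^ 3)⁻¹ b = 0} ≤ 2 * 1 ^ 2 :=
      card_kernelPoly_inv_cube_le_two hcube htr
    linarith [signSum_der_le_of_card_kernelPoly_le hg hcard]

lemma sq_signSum_trPow_seven_add_le (hcube : Function.Injective fun x : Fq n ↦ x ^ 3)
    {g : Fq n → ZMod 2} (hg : degLE g 2) :
    signSum (trPow n 7 + g) ^ 2 ≤ Fintype.card (Fq n) +
      √(2 * Fintype.card (Fq n)) / 2 *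
        (3 * Fintype.card (Fq n) - 4 + signSum (trPow n 7)) := by
  classical
  set h := trPow n 7 + g
  set R := √(2 * Fintype.card (Fq n)) / 2
  have hbij : Function.Bijective fun t : Fq n ↦ (t ^ 3)⁻¹ :=
    Finite.injective_iff_bijective.1 (inv_injective.comp hcube)
  have hzero : trPow n 7 0 = 0 := by simp [trPow, tr]
  calc signSum h ^ 2 = ∑ t, signSum (der h (t ^ 3)⁻¹) := by
        rw [sq_signSum, hbij.sum_comp fun a ↦ signSum (der h a)]
    _ = signSum (der h (0 ^ 3)⁻¹) + ∑ t ∈ univ.erase 0, signSum (der h (t ^ 3)⁻¹) :=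
        (add_sum_erase _ _ (mem_univ 0)).symm
    _ ≤ Fintype.card (Fq n) + ∑ t ∈ univ.erase 0, R * (3 + signChar (trPow n 7 t)) := by
        gcongr with t ht
        · exact signSum_le_card _
        · exact signSum_der_inv_cube_le hcube hg (ne_of_mem_erase ht)
    _ = Fintype.card (Fq n) + R * (3 * Fintype.card (Fq n) - 4 + signSum (trPow n 7)) := by
        rw [sum_erase_eq_sub (mem_univ 0), ← mul_sum, sum_add_distrib, hzero,
          AddChar.map_zero_eq_one, signSum, sum_const, card_univ, nsmul_eq_mul]
        ring

end SeventhPower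

section Numerics

lemma sqrt_two_mul_two_rpow (x : ℝ) : √(2 * 2 ^ x) = (2 : ℝ) ^ ((x + 1) / 2) := by
  rw [Real.sqrt_eq_rpow, mul_comm, ← Real.rpow_add_one two_ne_zero, ← Real.rpow_mul zero_le_two,
    mul_one_div]

lemma two_rpow_add_sqrt_mul_eq (x : ℝ) :
    2 ^ x + √(2 * 2 ^ x) / 2 * (3 * 2 ^ x - 4) =
      3 * (2 : ℝ) ^ ((3 * x - 1) / 2) + 2 ^ x - 2 ^ ((x + 3) / 2) := by
  have hlarge : (2 : ℝ) ^ ((3 * x - 1) / 2) = 2 ^ ((x + 1) / 2) * 2 ^ x / 2 := by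
    rw [← Real.rpow_add two_pos, ← Real.rpow_sub_one two_ne_zero]
    ring_nf
  have hsmall : (2 : ℝ) ^ ((x + 3) / 2) = 2 ^ ((x + 1) / 2) * 2 := by
    rw [← Real.rpow_add_one two_ne_zero]
    ring_nf
  rw [sqrt_two_mul_two_rpow, hlarge, hsmall]
  ring

lemma sqrt_two_mul_two_rpow_mul_sqrt (x : ℝ) :
    √(2 * 2 ^ x) * √(2 ^ x) = (2 : ℝ) ^ (x + 1 / 2) := by
  rw [sqrt_two_mul_two_rpow, Real.sqrt_eq_rpow, ← Real.rpow_mul zero_le_two,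
    ← Real.rpow_add two_pos]
  ring_nf

end Numerics

section Bound

variable {n : ℕ}

lemma card_fq [Fintype (Fq n)] (hn : n ≠ 0) : Fintype.card (Fq n) = 2 ^ n := by
  rw [← Nat.card_eq_fintype_card, GaloisField.card 2 n hn]

lemma cube_injective_of_odd (hodd : Odd n) : Function.Injective fun x : Fq n ↦ x ^ 3 := by
  have := Fintype.ofFinite (Fq n)
  refine pow_injective_of_coprime three_ne_zero ?_
  rw [card_fq hodd.pos.ne', Nat.Coprime, show 3 = 2 ^ 2 - 1 from rfl,
    Nat.pow_sub_one_gcd_pow_sub_one, hodd.coprime_two_right, pow_one]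

variable [Fintype (Fq n)]

lemma abs_signSum_trPow_two_pow_sub_one_le (hn : n ≠ 0) {k : ℕ} (hk : k ≠ 0) :
    |signSum (trPow n (2 ^ k - 1))| ≤ (2 ^ n.gcd k - 2) * √(2 ^ n) := by
  have h := abs_signSum_trPow_le (n := n) (Nat.sub_ne_zero_of_lt (Nat.one_lt_two_pow hk))
  rw [card_fq hn, Nat.pow_sub_one_gcd_pow_sub_one, Nat.cast_pred (by positivity)] at h
  push_cast at h
  convert h using 2
  ring

lemma le_nl_two_trPow_seven (hodd : Odd n) {B : ℝ} (hB : signSum (trPow n 7) ≤ B) :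
    (2 : ℝ) ^ ((n : ℝ) - 1) - 1 / 2 * √(3 * 2 ^ ((3 * (n : ℝ) - 1) / 2) + 2 ^ (n : ℝ)
      - 2 ^ (((n : ℝ) + 3) / 2) + √(2 * 2 ^ (n : ℝ)) / 2 * B) ≤ nl 2 (trPow n 7) := by
  have hcard : (Fintype.card (Fq n) : ℝ) = 2 ^ (n : ℝ) := by
    rw [card_fq hodd.pos.ne', Nat.cast_pow, Nat.cast_ofNat, Real.rpow_natCast]
  rw [Real.rpow_sub_one two_ne_zero, ← hcard]
  refine le_nl_of_forall_sq_signSum_add_le fun g hg ↦ ?_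
  refine (sq_signSum_trPow_seven_add_le (cube_injective_of_odd hodd) hg).trans ?_
  rw [hcard, ← two_rpow_add_sqrt_mul_eq, add_assoc, ← mul_add]
  gcongr

end Bound

/-- Second-order nonlinearity lower bound for `tr(x^7)`, odd `n`. -/
theorem second_order_nl_tr_x7_odd (n : ℕ) (hn : 0 < n) (hodd : Odd n)
    (f : Fq n → ZMod 2) (hf : ∀ x, f x = tr (x ^ 7)) :
    (¬ (3 ∣ n) →
      (nl 2 f : ℝ) ≥ (2:ℝ) ^ ((n:ℝ) - 1) - (1/2) * Real.sqrt
        (3 * (2:ℝ) ^ ((3 * (n:ℝ) - 1) / 2) + (2:ℝ) ^ (n:ℝ)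
          - (2:ℝ) ^ (((n:ℝ) + 3) / 2))) ∧
    ((3 ∣ n) →
      (nl 2 f : ℝ) ≥ (2:ℝ) ^ ((n:ℝ) - 1) - (1/2) * Real.sqrt
        (3 * (2:ℝ) ^ ((3 * (n:ℝ) - 1) / 2) + (2:ℝ) ^ (n:ℝ)
          + 3 * (2:ℝ) ^ ((n:ℝ) + 1/2) - (2:ℝ) ^ (((n:ℝ) + 3) / 2))) := by
  obtain rfl : f = trPow n 7 := funext hf
  have := Fintype.ofFinite (Fq n)
  have hS := (abs_le.1 (abs_signSum_trPow_two_pow_sub_one_le (n := n) hn.ne' three_ne_zero)).2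
  constructor <;> intro h3
  · have hgcd : n.gcd 3 = 1 := ((Nat.prime_three.coprime_iff_not_dvd).2 h3).symm
    rw [hgcd] at hS
    simpa using le_nl_two_trPow_seven (B := 0) hodd (by simpa using hS)
  · rw [Nat.gcd_eq_right h3, ← Real.rpow_natCast _ n] at hS
    convert le_nl_two_trPow_seven hodd hS using 4
    rw [← sqrt_two_mul_two_rpow_mul_sqrt]
    ring
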